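/- The algebra 𝔏₅ does not degenerate to 𝔏₂: the structure λ with table e₁e₁ = e₂, e₂e₁ = e₃, e₃e₁ = e₄ does not lie in the closure of the GL(V)-orbit of the structure μ with table e₁e₁ = e₃, e₂e₁ = e₃, e₂e₂ = e₄, e₃e₁ = e₄. (This follows since dim μ² = 2 < 3 = dim λ², where μ² denotes the span of all products μ(x, y).) -/

import Mathlib

noncomputable section

/-- `V = ℂ⁴`. -/
abbrev V : Type := Fin 4 → ℂ

/-- The standard basis vectors `e₁, e₂, e₃, e₄` of `V` (indexed by `0, 1, 2, 3`). -/
def e (i : Fin 4) : V := Pi.single i 1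

/-- The `GL(V)`-orbit `O(μ)` of an algebra structure `μ` on `V`, for the action
`(g • μ)(x, y) = g (μ (g⁻¹ x) (g⁻¹ y))`. -/
def orbit (μ : V →L[ℂ] V →L[ℂ] V) : Set (V →L[ℂ] V →L[ℂ] V) :=
  {ν | ∃ g : V ≃L[ℂ] V, ∀ x y : V, ν x y = g (μ (g.symm x) (g.symm y))}

theorem aux_expand (x : V) : x = x 0 • e 0 + x 1 • e 1 + x 2 • e 2 + x 3 • e 3 := by
  ext i
  fin_cases i <;> simp [e, Pi.single_apply]

theorem aux_det (a b : Fin 3 → ℂ) (p q : V) :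
    Matrix.det (Matrix.of fun i j : Fin 3 => (a i • p + b i • q) j.succ) = 0 := by
  rw [Matrix.det_fin_three]
  simp
  ring

/-- 𝔏₅ does not degenerate to 𝔏₂. -/
theorem stmt19 (μ lam : V →L[ℂ] V →L[ℂ] V)
    (hμ : ∀ i j : Fin 4, μ (e i) (e j) =
    (![
      ![e 2, 0, 0, 0],
      ![e 2, e 3, 0, 0],
      ![e 3, 0, 0, 0],
      ![0, 0, 0, 0]
     ] : Fin 4 → Fin 4 → V) i j)
    (hlam : ∀ i j : Fin 4, lam (e i) (e j) =
    (![
      ![e 1, 0, 0, 0],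
      ![e 2, 0, 0, 0],
      ![e 3, 0, 0, 0],
      ![0, 0, 0, 0]
     ] : Fin 4 → Fin 4 → V) i j) :
    lam ∉ closure (orbit μ) := by
  set F : (V →L[ℂ] V →L[ℂ] V) → ℂ := fun ν =>
    Matrix.det (Matrix.of fun i j : Fin 3 => ν (e i.castSucc) (e 0) j.succ) with hF
  have hc : Continuous F := by
    apply Continuous.matrix_det
    refine continuous_pi fun i => continuous_pi fun j => ?_
    have : Continuous fun ν : V →L[ℂ] V →L[ℂ] V => ν (e i.castSucc) (e 0) := by fun_prop
    exact (continuous_apply j.succ).comp this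
  have hr : ∀ x y : V, ∃ a b : ℂ, μ x y = a • e 2 + b • e 3 := by
    intro x y
    refine ⟨x 0 * y 0 + x 1 * y 0, x 1 * y 1 + x 2 * y 0, ?_⟩
    conv_lhs => rw [aux_expand x, aux_expand y]
    simp only [map_add, map_smul, ContinuousLinearMap.add_apply, ContinuousLinearMap.smul_apply, hμ]
    simp
    module
  have ho : orbit μ ⊆ F ⁻¹' {0} := by
    rintro ν ⟨g, hg⟩
    choose a b hab using fun i : Fin 3 => hr (g.symm (e i.castSucc)) (g.symm (e 0))
    have := aux_det a b (g (e 2)) (g (e 3))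
    simp only [Set.mem_preimage, Set.mem_singleton_iff, hF, hg, hab, map_add, map_smul]
    exact this
  intro hl
  have h0 : F lam = 0 := closure_minimal ho (isClosed_singleton.preimage hc) hl
  have h1 : F lam = 1 := by
    have hm : (Matrix.of fun i j : Fin 3 => lam (e i.castSucc) (e 0) j.succ) = 1 := by
      ext i j
      rw [Matrix.of_apply, hlam]
      fin_cases i <;> fin_cases j <;> simp [e, Pi.single_apply]
    simp only [hF]
    rw [hm, Matrix.det_one]
  rw [h0] at h1
  exact zero_ne_one h1
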